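/- arXiv:2201.10082 — 3 statements merged into one kernel-verified Lean document; each statement's English description precedes it below -/
import Mathlib

section
/- Let n ≥ 2 be an integer and let f : [0,1] → [0,1] be a nondecreasing function such that f(ε) ≤ n·ε for every ε ∈ [0,1]. Suppose ε* ∈ [n^{−3}, 1] satisfies f(ε*) ≤ n^{−9}. Then ∫_0^1 (f(ε)/ε) dε ≤ 1/n² + 1/n⁶ − ln(ε*). -/
open MeasureTheory

/-!
Near `0` the bound `f ε ≤ C ε` keeps `f ε / ε` below `C`. Away from `0` monotonicity bounds `f` by
its value at the right end of an interval, and integrating `1 / ε` produces a logarithm. Splitting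
`[0, 1]` at `n⁻³` and `ε*` gives `n · n⁻³`, then `n⁻⁹ log (n³ ε*) ≤ n⁻⁹ · n³`, then `-log ε*`.
-/

theorem integrableOn_Ioc_div_id_of_abs_le_mul {f : ℝ → ℝ} {b C : ℝ}
    (hf : AEMeasurable f (volume.restrict (Set.Ioc 0 b)))
    (hfC : ∀ x ∈ Set.Ioc 0 b, |f x| ≤ C * x) :
    IntegrableOn (fun x ↦ f x / x) (Set.Ioc 0 b) := by
  refine Integrable.of_bound (hf.div aemeasurable_id).aestronglyMeasurable C ?_
  filter_upwards [ae_restrict_mem measurableSet_Ioc] with x hx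
  rw [Real.norm_eq_abs, abs_div, abs_of_pos hx.1, div_le_iff₀ hx.1]
  exact hfC x hx

theorem integral_div_id_le_mul_of_le_mul {f : ℝ → ℝ} {a b C : ℝ} (ha : 0 ≤ a) (hab : a ≤ b)
    (hint : IntervalIntegrable (fun x ↦ f x / x) volume a b)
    (hfC : ∀ x ∈ Set.Ioo a b, f x ≤ C * x) :
    ∫ x in a..b, f x / x ≤ C * (b - a) :=
  calc ∫ x in a..b, f x / x
      ≤ ∫ _ in a..b, C :=
        intervalIntegral.integral_mono_on_of_le_Ioo hab hint intervalIntegrable_const fun x hx ↦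
          (div_le_iff₀ (ha.trans_lt hx.1)).2 (hfC x hx)
    _ = C * (b - a) := by rw [intervalIntegral.integral_const, smul_eq_mul, mul_comm]

theorem integral_div_id_le_mul_log_of_le {f : ℝ → ℝ} {a b M : ℝ} (ha : 0 < a) (hab : a ≤ b)
    (hint : IntervalIntegrable (fun x ↦ f x / x) volume a b)
    (hfM : ∀ x ∈ Set.Ioo a b, f x ≤ M) :
    ∫ x in a..b, f x / x ≤ M * Real.log (b / a) := by
  have hzero : (0 : ℝ) ∉ Set.uIcc a b := Set.notMem_uIcc_of_lt ha (ha.trans_le hab)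
  have hinv : IntervalIntegrable (fun x : ℝ ↦ x⁻¹) volume a b :=
    intervalIntegrable_inv_iff.2 (.inr hzero)
  calc ∫ x in a..b, f x / x
      ≤ ∫ x in a..b, M * x⁻¹ :=
        intervalIntegral.integral_mono_on_of_le_Ioo hab hint (hinv.const_mul M) fun x hx ↦
          mul_le_mul_of_nonneg_right (hfM x hx) (inv_nonneg.2 (ha.trans hx.1).le)
    _ = M * Real.log (b / a) := by
        rw [intervalIntegral.integral_const_mul, integral_inv hzero]

theorem integral_div_id_le_of_monotoneOn {f : ℝ → ℝ} {a s b C : ℝ} (ha : 0 < a) (has : a ≤ s)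
    (hsb : s ≤ b) (hf_mono : MonotoneOn f (Set.Icc 0 b)) (hf_zero : 0 ≤ f 0)
    (hf_le : ∀ x ∈ Set.Ioc 0 b, f x ≤ C * x) :
    ∫ x in 0..b, f x / x ≤ C * a + f s * Real.log (s / a) + f b * Real.log (b / s) := by
  have hs : 0 < s := ha.trans_le has
  have hb : 0 < b := hs.trans_le hsb
  have hf_nonneg : ∀ x ∈ Set.Icc 0 b, 0 ≤ f x := fun x hx ↦
    hf_zero.trans (hf_mono ⟨le_rfl, hb.le⟩ hx hx.1)
  have hint : IntegrableOn (fun x ↦ f x / x) (Set.Ioc 0 b) := by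
    refine integrableOn_Ioc_div_id_of_abs_le_mul (C := C)
      (aemeasurable_restrict_of_monotoneOn measurableSet_Ioc
        (hf_mono.mono Set.Ioc_subset_Icc_self)) fun x hx ↦ ?_
    rw [abs_of_nonneg (hf_nonneg x (Set.Ioc_subset_Icc_self hx))]
    exact hf_le x hx
  have hint_sub {c d : ℝ} (hc : 0 ≤ c) (hcd : c ≤ d) (hd : d ≤ b) :
      IntervalIntegrable (fun x ↦ f x / x) volume c d :=
    (intervalIntegrable_iff_integrableOn_Ioc_of_le hcd).2
      (hint.mono_set (Set.Ioc_subset_Ioc hc hd))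
  have hint₁ := hint_sub le_rfl ha.le (has.trans hsb)
  have hint₂ := hint_sub ha.le has hsb
  have hint₃ := hint_sub hs.le hsb le_rfl
  rw [← intervalIntegral.integral_add_adjacent_intervals (hint₁.trans hint₂) hint₃,
    ← intervalIntegral.integral_add_adjacent_intervals hint₁ hint₂]
  gcongr
  · simpa only [sub_zero] using integral_div_id_le_mul_of_le_mul le_rfl ha.le hint₁ fun x hx ↦
      hf_le x ⟨hx.1, hx.2.le.trans (has.trans hsb)⟩
  · exact integral_div_id_le_mul_log_of_le ha has hint₂ fun x hx ↦
      hf_mono ⟨(ha.trans hx.1).le, hx.2.le.trans hsb⟩ ⟨hs.le, hsb⟩ hx.2.le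
  · exact integral_div_id_le_mul_log_of_le hs hsb hint₃ fun x hx ↦
      hf_mono ⟨(hs.trans hx.1).le, hx.2.le⟩ ⟨hb.le, le_rfl⟩ hx.2.le

theorem core_integral_estimate_general {f : ℝ → ℝ} {a s C δ : ℝ} (ha : 0 < a)
    (hs : s ∈ Set.Icc a 1) (hf_mono : MonotoneOn f (Set.Icc 0 1)) (hf_zero : 0 ≤ f 0)
    (hf_one : f 1 ≤ 1) (hf_le : ∀ x ∈ Set.Ioc 0 1, f x ≤ C * x) (hfs : f s ≤ δ) :
    ∫ x in Set.Ioc 0 1, f x / x ≤ C * a + δ / a - Real.log s := by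
  obtain ⟨has, hs_one⟩ := hs
  have hs_pos : 0 < s := ha.trans_le has
  have hfs_nonneg : 0 ≤ f s :=
    hf_zero.trans (hf_mono ⟨le_rfl, zero_le_one⟩ ⟨hs_pos.le, hs_one⟩ hs_pos.le)
  have h_middle : f s * Real.log (s / a) ≤ δ / a :=
    calc f s * Real.log (s / a)
        ≤ f s * (s / a) := by gcongr; exact Real.log_le_self (by positivity)
      _ ≤ δ * (1 / a) := by gcongr; exact hfs_nonneg.trans hfs
      _ = δ / a := mul_one_div δ a
  have h_right : f 1 * Real.log (1 / s) ≤ -Real.log s := by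
    rw [one_div, Real.log_inv]
    exact mul_le_of_le_one_left (neg_nonneg.2 (Real.log_nonpos hs_pos.le hs_one)) hf_one
  rw [← intervalIntegral.integral_of_le zero_le_one]
  linarith [integral_div_id_le_of_monotoneOn ha has hs_one hf_mono hf_zero hf_le]

/-- Let `n ≥ 2` and let `f : [0,1] → [0,1]` be nondecreasing with
`f(ε) ≤ nε` on `[0,1]`. If `ε* ∈ [n^{−3}, 1]` satisfies `f(ε*) ≤ n^{−9}`, then
`∫_0^1 f(ε)/ε dε ≤ 1/n² + 1/n⁶ − ln ε*`. -/
theorem core_integral_estimate (n : ℕ) (hn : 2 ≤ n) (f : ℝ → ℝ)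
    (hf_mem : ∀ ε ∈ Set.Icc (0:ℝ) 1, f ε ∈ Set.Icc (0:ℝ) 1)
    (hf_mono : MonotoneOn f (Set.Icc (0:ℝ) 1))
    (hf_le : ∀ ε ∈ Set.Icc (0:ℝ) 1, f ε ≤ (n:ℝ) * ε)
    (εs : ℝ) (hεs : εs ∈ Set.Icc (1 / (n:ℝ) ^ 3) 1)
    (hfεs : f εs ≤ 1 / (n:ℝ) ^ 9) :
    ∫ ε in Set.Ioc (0:ℝ) 1, f ε / ε ≤
      1 / (n:ℝ) ^ 2 + 1 / (n:ℝ) ^ 6 - Real.log εs := by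
  convert core_integral_estimate_general (by positivity) hεs hf_mono (hf_mem 0 (by simp)).1
    (hf_mem 1 (by simp)).2 (fun ε hε ↦ hf_le ε (Set.Ioc_subset_Icc_self hε)) hfεs using 3 <;>
    field_simp
end

section
/- Let μ ≥ 2 and let c₁ > 0 be a constant such that for every ε ∈ [0,1] and every integer m ≥ 0, 2^{−m} · #{ b ∈ {0,1}^m : Z^{(b)}(ε) ≤ 2^{−10m} } ≥ 1 − ε − c₁ 2^{−m/μ}. Fix R ∈ (0,1) and μ_s > 0, and set c = 2c₁/(1−R) + 2. Then there exists n₀ such that for every integer m with n = 2^m ≥ n₀ and nR ∈ ℕ, the following holds. Set ε* = 1 − R − c₁ n^{−1/μ}, and let I ⊆ {0,1}^m be a set of cardinality nR on which Z^{(b)}(ε*) attains its nR smallest values. Then every nondecreasing function P_e : [0,1] → [0,1] satisfying P_e(ε) ≤ 1 − (1−ε)^n for all ε ∈ [0,1] and P_e(ε*) ≤ Σ_{b∈I} Z^{(b)}(ε*) obeys 1/(nR) + (1/(μ_s n R)) ∫_0^1 (P_e(ε)/ε) dε ≤ 1/(nR) + (1/(μ_s n R)) ( −ln(1−R) + c·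 n^{−1/μ} ). -/
/-!
Cut `∫₀¹ P(ε)/ε dε` at `s/t` and at the design parameter `s = ε*`. On `(0, s/t]` the bound
`P(ε) ≤ 1 - (1-ε)ⁿ ≤ nε` contributes at most `ns/t`; on `(s/t, s]` monotonicity contributes
`P(s) log t`; on `(s, 1]` the trivial bound `P ≤ 1` contributes `-log s`. With `δ = n^{-1/μ}` and
`t = n/δ` the first term is at most `δ`. By the hypothesis on the fraction of good channels, all
`nR` selected channels are good at `s = 1 - R - c₁δ`, so `P(s) ≤ n^{1-d}` (with `d = 10` in the
theorem), which makes the second term at most `δ` for large `n` as soon as `d > 1 + 1/μ`. Finally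
`-log s` exceeds `-log (1-R)` by at most `2c₁δ/(1-R)`.
-/

open MeasureTheory

/-- One polarization step for the binary erasure channel. -/
def polarStep (b : Bool) (z : ℝ) : ℝ := if b then z ^ 2 else 2 * z - z ^ 2

/-- Erasure probability `Z^{(b)}(ε)` of the synthetic channel indexed by `b ∈ {0,1}^m`. -/
def polarZ (ε : ℝ) {m : ℕ} (b : Fin m → Bool) : ℝ :=
  (List.ofFn b).foldl (fun z bit => polarStep bit z) ε

section IntegralBound

open Set

variable {P : ℝ → ℝ} {C a b s t : ℝ}

theorem integrableOn_div_of_monotoneOn (hP : MonotoneOn P (Ioc 0 b))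
    (h₀ : ∀ x ∈ Ioc 0 b, 0 ≤ P x) (hC : ∀ x ∈ Ioc 0 b, P x ≤ C * x) :
    IntegrableOn (fun x ↦ P x / x) (Ioc 0 b) := by
  have hmeas : AEMeasurable (fun x ↦ P x / x) (volume.restrict (Ioc 0 b)) :=
    (aemeasurable_restrict_of_monotoneOn measurableSet_Ioc hP).div aemeasurable_id
  refine Integrable.of_bound hmeas.aestronglyMeasurable C ?_
  filter_upwards [ae_restrict_mem measurableSet_Ioc] with x hx
  rw [Real.norm_of_nonneg (div_nonneg (h₀ x hx) hx.1.le)]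
  exact (div_le_iff₀ hx.1).2 (hC x hx)

theorem intervalIntegral_div_le_mul (ha : 0 ≤ a)
    (hint : IntervalIntegrable (fun x ↦ P x / x) volume 0 a)
    (hC : ∀ x ∈ Ioo 0 a, P x ≤ C * x) : ∫ x in 0..a, P x / x ≤ C * a := by
  calc ∫ x in 0..a, P x / x
      ≤ ∫ _ in 0..a, C := intervalIntegral.integral_mono_on_of_le_Ioo ha hint (by simp)
        fun x hx ↦ (div_le_iff₀ hx.1).2 (hC x hx)
    _ = C * a := by simp [mul_comm]

theorem intervalIntegral_div_le_mul_log (ha : 0 < a) (hab : a ≤ b)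
    (hint : IntervalIntegrable (fun x ↦ P x / x) volume a b)
    (hC : ∀ x ∈ Ioo a b, P x ≤ C) : ∫ x in a..b, P x / x ≤ C * Real.log (b / a) := by
  have hne : ∀ x ∈ uIcc a b, x ≠ 0 := fun x hx ↦ by
    rw [uIcc_of_le hab] at hx
    exact (ha.trans_le hx.1).ne'
  have hinv : IntervalIntegrable (fun x ↦ C * (1 / x)) volume a b :=
    (intervalIntegral.intervalIntegrable_one_div hne continuousOn_id).const_mul C
  calc ∫ x in a..b, P x / x
      ≤ ∫ x in a..b, C * (1 / x) := by
        refine intervalIntegral.integral_mono_on_of_le_Ioo hab hint hinv fun x hx ↦ ?_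
        rw [mul_one_div]
        exact div_le_div_of_nonneg_right (hC x hx) (ha.trans hx.1).le
    _ = C * Real.log (b / a) := by
        rw [intervalIntegral.integral_const_mul, integral_one_div_of_pos ha (ha.trans_le hab)]

theorem setIntegral_div_le_of_monotoneOn (hP : MonotoneOn P (Ioc 0 b))
    (h₀ : ∀ x ∈ Ioc 0 b, 0 ≤ P x) (hC : ∀ x ∈ Ioc 0 b, P x ≤ C * x)
    (hs : s ∈ Ioc 0 b) (ht : 1 ≤ t) :
    ∫ x in Ioc 0 b, P x / x ≤ C * (s / t) + P s * Real.log t + P b * Real.log (b / s) := by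
  have ht₀ : 0 < t := one_pos.trans_le ht
  have hst₀ : 0 < s / t := div_pos hs.1 ht₀
  have hst : s / t ≤ s := div_le_self hs.1.le ht
  have hb : 0 < b := hs.1.trans_le hs.2
  have hint {x y : ℝ} (hx : 0 ≤ x) (hxy : x ≤ y) (hy : y ≤ b) :
      IntervalIntegrable (fun ε ↦ P ε / ε) volume x y :=
    (intervalIntegrable_iff_integrableOn_Ioc_of_le hxy).2 <|
      (integrableOn_div_of_monotoneOn hP h₀ hC).mono_set (Ioc_subset_Ioc hx hy)
  have hnear : ∫ x in 0..s / t, P x / x ≤ C * (s / t) :=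
    intervalIntegral_div_le_mul hst₀.le (hint le_rfl hst₀.le (hst.trans hs.2))
      fun x hx ↦ hC x ⟨hx.1, hx.2.le.trans (hst.trans hs.2)⟩
  have hmid : ∫ x in s / t..s, P x / x ≤ P s * Real.log t := by
    have h := intervalIntegral_div_le_mul_log hst₀ hst (hint hst₀.le hst hs.2)
      fun x hx ↦ hP ⟨hst₀.trans hx.1, hx.2.le.trans hs.2⟩ hs hx.2.le
    rwa [div_div_cancel₀ hs.1.ne'] at h
  have hfar : ∫ x in s..b, P x / x ≤ P b * Real.log (b / s) :=
    intervalIntegral_div_le_mul_log hs.1 hs.2 (hint hs.1.le hs.2 le_rfl)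
      fun x hx ↦ hP ⟨hs.1.trans hx.1, hx.2.le⟩ ⟨hb, le_rfl⟩ hx.2.le
  rw [← intervalIntegral.integral_of_le hb.le,
    ← intervalIntegral.integral_add_adjacent_intervals (hint le_rfl hs.1.le hs.2)
      (hint hs.1.le hs.2 le_rfl),
    ← intervalIntegral.integral_add_adjacent_intervals
      (hint le_rfl hst₀.le (hst.trans hs.2)) (hint hst₀.le hst hs.2)]
  exact add_le_add_three hnear hmid hfar

theorem one_sub_one_sub_pow_le_mul {x : ℝ} (hx : x ≤ 2) (n : ℕ) :
    1 - (1 - x) ^ n ≤ n * x := by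
  have h := one_add_mul_le_pow (neg_le_neg hx) n
  rw [← sub_eq_add_neg] at h
  linarith

theorem neg_log_sub_le {r x : ℝ} (hr : 0 < r) (hx₀ : 0 ≤ x) (hx : x ≤ r / 2) :
    -Real.log (r - x) ≤ -Real.log r + 2 * x / r := by
  have hrx : 0 < r - x := by linarith
  calc -Real.log (r - x) = -Real.log r + Real.log (r / (r - x)) := by
        rw [Real.log_div hr.ne' hrx.ne']
        ring
    _ ≤ -Real.log r + (r / (r - x) - 1) := by
        gcongr
        exact Real.log_le_sub_one_of_pos (div_pos hr hrx)
    _ = -Real.log r + x / (r - x) := by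
        field_simp
        ring
    _ ≤ -Real.log r + x / (r / 2) := by
        gcongr
        linarith
    _ = -Real.log r + 2 * x / r := by
        field_simp

theorem setIntegral_div_le_of_gap_to_capacity {n : ℕ} {R g δ : ℝ}
    (hP : MonotoneOn P (Icc 0 1)) (hP01 : ∀ x ∈ Icc (0 : ℝ) 1, P x ∈ Icc (0 : ℝ) 1)
    (herase : ∀ x ∈ Icc (0 : ℝ) 1, P x ≤ 1 - (1 - x) ^ n)
    (hR : R ∈ Ioo (0 : ℝ) 1) (hg₀ : 0 ≤ g) (hg : g ≤ (1 - R) / 2)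
    (hδ₀ : 0 < δ) (hδ : δ ≤ n) (hPδ : P (1 - R - g) * Real.log (n / δ) ≤ δ) :
    ∫ x in Ioc 0 1, P x / x ≤ -Real.log (1 - R) + 2 * g / (1 - R) + 2 * δ := by
  obtain ⟨hR₀, hR₁⟩ := hR
  have hs : 1 - R - g ∈ Ioc (0 : ℝ) 1 := ⟨by linarith, by linarith⟩
  have hlog : -Real.log (1 - R - g) ≤ -Real.log (1 - R) + 2 * g / (1 - R) :=
    neg_log_sub_le (by linarith) hg₀ hg
  have hcut := setIntegral_div_le_of_monotoneOn (hP.mono Ioc_subset_Icc_self)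
    (fun x hx ↦ (hP01 x (Ioc_subset_Icc_self hx)).1)
    (fun x hx ↦ (herase x (Ioc_subset_Icc_self hx)).trans
      (one_sub_one_sub_pow_le_mul (by linarith [hx.2]) n))
    hs ((one_le_div hδ₀).2 hδ)
  have hnear : n * ((1 - R - g) / (n / δ)) ≤ δ := by
    have hn : (0 : ℝ) < n := hδ₀.trans_le hδ
    calc n * ((1 - R - g) / (n / δ)) = (1 - R - g) * δ := by field_simp
      _ ≤ δ := mul_le_of_le_one_left hδ₀.le hs.2
  have hfar : P 1 * Real.log (1 / (1 - R - g)) ≤ -Real.log (1 - R - g) := by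
    rw [one_div, Real.log_inv]
    exact mul_le_of_le_one_left (neg_nonneg.2 (Real.log_nonpos hs.1.le hs.2))
      (hP01 1 ⟨zero_le_one, le_rfl⟩).2
  linarith

end IntegralBound

theorem sum_le_card_mul_of_smallest {ι : Type*} [Fintype ι] {Z : ι → ℝ} {I : Finset ι} {θ : ℝ}
    (hI : ∀ b ∈ I, ∀ b' ∉ I, Z b ≤ Z b') (hcard : I.card ≤ (Finset.univ.filter (Z · ≤ θ)).card) :
    ∑ b ∈ I, Z b ≤ I.card * θ := by
  suffices hle : ∀ b ∈ I, Z b ≤ θ by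
    simpa only [nsmul_eq_mul] using Finset.sum_le_card_nsmul I Z θ hle
  intro b hb
  by_contra hbθ
  have hsub : Finset.univ.filter (Z · ≤ θ) ⊆ I := fun b' hb' ↦ by
    by_contra hb'I
    exact hbθ ((hI b hb b' hb'I).trans (Finset.mem_filter.1 hb').2)
  rw [← Finset.eq_of_subset_of_card_le hsub hcard] at hb
  exact hbθ (Finset.mem_filter.1 hb).2

theorem sum_le_mul_of_smallest {ι : Type*} [Fintype ι] {Z : ι → ℝ} {I : Finset ι} {N R θ : ℝ}
    (hN : 0 < N) (hR : R ≤ 1) (hθ : 0 ≤ θ) (hI : ∀ b ∈ I, ∀ b' ∉ I, Z b ≤ Z b')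
    (hcard : (I.card : ℝ) = N * R)
    (hfrac : R ≤ ((Finset.univ.filter (Z · ≤ θ)).card : ℝ) / N) :
    ∑ b ∈ I, Z b ≤ N * θ := by
  have hle : I.card ≤ (Finset.univ.filter (Z · ≤ θ)).card := by
    rw [le_div_iff₀' hN, ← hcard] at hfrac
    exact_mod_cast hfrac
  calc ∑ b ∈ I, Z b ≤ I.card * θ := sum_le_card_mul_of_smallest hI hle
    _ = N * R * θ := by rw [hcard]
    _ ≤ N * θ := by
        gcongr
        exact mul_le_of_le_one_right hN.le hR

theorem setIntegral_div_le_of_good_fraction {ι : Type*} [Fintype ι] {Z : ι → ℝ} {I : Finset ι}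
    {P : ℝ → ℝ} {n : ℕ} {R g δ θ : ℝ}
    (hP : MonotoneOn P (Set.Icc 0 1)) (hP01 : ∀ x ∈ Set.Icc (0 : ℝ) 1, P x ∈ Set.Icc (0 : ℝ) 1)
    (herase : ∀ x ∈ Set.Icc (0 : ℝ) 1, P x ≤ 1 - (1 - x) ^ n)
    (hunion : P (1 - R - g) ≤ ∑ b ∈ I, Z b)
    (hR : R ∈ Set.Ioo (0 : ℝ) 1) (hg₀ : 0 ≤ g) (hg : g ≤ (1 - R) / 2)
    (hI : ∀ b ∈ I, ∀ b' ∉ I, Z b ≤ Z b') (hcard : (I.card : ℝ) = n * R)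
    (hfrac : R ≤ ((Finset.univ.filter (Z · ≤ θ)).card : ℝ) / n)
    (hδ₀ : 0 < δ) (hδ : δ ≤ n) (hθ₀ : 0 ≤ θ) (hθ : n * θ * Real.log (n / δ) ≤ δ) :
    ∫ x in Set.Ioc 0 1, P x / x ≤ -Real.log (1 - R) + 2 * g / (1 - R) + 2 * δ := by
  have hPθ : P (1 - R - g) ≤ n * θ :=
    hunion.trans (sum_le_mul_of_smallest (hδ₀.trans_le hδ) hR.2.le hθ₀ hI hcard hfrac)
  have hlog : 0 ≤ Real.log (n / δ) := Real.log_nonneg ((one_le_div hδ₀).2 hδ)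
  exact setIntegral_div_le_of_gap_to_capacity hP hP01 herase hR hg₀ hg hδ₀ hδ
    ((mul_le_mul_of_nonneg_right hPθ hlog).trans hθ)

section Asymptotics

open Filter Topology

theorem eventually_mul_rpow_mul_log_le_rpow {κ d : ℝ} (hd : κ + 1 < d) :
    ∀ᶠ x : ℝ in atTop, x * x ^ (-d) * Real.log (x / x ^ (-κ)) ≤ x ^ (-κ) := by
  have ho : (fun x ↦ (κ + 1) * Real.log x) =o[atTop] fun x : ℝ ↦ x ^ (d - (κ + 1)) :=
    (isLittleO_log_rpow_atTop (sub_pos.2 hd)).const_mul_left _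
  filter_upwards [ho.bound one_pos, eventually_gt_atTop 0] with x hx hx₀
  have hlog : Real.log (x / x ^ (-κ)) = (κ + 1) * Real.log x := by
    rw [Real.log_div hx₀.ne' (Real.rpow_pos_of_pos hx₀ _).ne', Real.log_rpow hx₀]
    ring
  have hx : (κ + 1) * Real.log x ≤ x ^ (d - (κ + 1)) := by
    rw [one_mul, Real.norm_of_nonneg (Real.rpow_nonneg hx₀.le _)] at hx
    exact (le_abs_self _).trans hx
  calc x * x ^ (-d) * Real.log (x / x ^ (-κ))
      ≤ x ^ (1 : ℝ) * x ^ (-d) * x ^ (d - (κ + 1)) := by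
        rw [hlog, Real.rpow_one]
        gcongr
    _ = x ^ (-κ) := by
        rw [← Real.rpow_add hx₀, ← Real.rpow_add hx₀]
        ring_nf

theorem eventually_const_mul_rpow_neg_le {κ r : ℝ} (hκ : 0 < κ) (c : ℝ) (hr : 0 < r) :
    ∀ᶠ x : ℝ in atTop, c * x ^ (-κ) ≤ r := by
  have hlim : Tendsto (fun x : ℝ ↦ c * x ^ (-κ)) atTop (𝓝 0) := by
    simpa using (tendsto_rpow_neg_atTop hκ).const_mul c
  exact hlim.eventually_le_const hr

end Asymptotics

theorem average_execution_time_polar_general {μ c₁ R μs d : ℝ} (hμ : 0 < μ) (hc₁ : 0 ≤ c₁)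
    (hR : R ∈ Set.Ioo (0 : ℝ) 1) (hμs : 0 < μs) (hd : 1 / μ + 1 < d)
    (Z : ℝ → ∀ {m : ℕ}, (Fin m → Bool) → ℝ)
    (hfrac : ∀ ε ∈ Set.Icc (0 : ℝ) 1, ∀ m : ℕ,
      (((Finset.univ.filter (fun b : Fin m → Bool ↦
          Z ε b ≤ (2 : ℝ) ^ (-(d * (m : ℝ))))).card : ℝ) / 2 ^ m) ≥
        1 - ε - c₁ * (2 : ℝ) ^ (-((m : ℝ) / μ))) :
    ∃ n₀ : ℕ, ∀ m k : ℕ, n₀ ≤ 2 ^ m → (k : ℝ) = (2 : ℝ) ^ m * R →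
      ∀ εs : ℝ, εs = 1 - R - c₁ * ((2 : ℝ) ^ m) ^ (-(1 / μ)) →
      ∀ I : Finset (Fin m → Bool), I.card = k →
        (∀ b ∈ I, ∀ b' ∉ I, Z εs b ≤ Z εs b') →
      ∀ Pe : ℝ → ℝ, MonotoneOn Pe (Set.Icc (0 : ℝ) 1) →
        (∀ ε ∈ Set.Icc (0 : ℝ) 1, Pe ε ∈ Set.Icc (0 : ℝ) 1) →
        (∀ ε ∈ Set.Icc (0 : ℝ) 1, Pe ε ≤ 1 - (1 - ε) ^ (2 ^ m)) →
        Pe εs ≤ ∑ b ∈ I, Z εs b →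
        1 / ((2 : ℝ) ^ m * R) +
            (1 / (μs * (2 : ℝ) ^ m * R)) * ∫ ε in Set.Ioc (0 : ℝ) 1, Pe ε / ε ≤
          1 / ((2 : ℝ) ^ m * R) + (1 / (μs * (2 : ℝ) ^ m * R)) *
            (-Real.log (1 - R) +
              (2 * c₁ / (1 - R) + 2) * ((2 : ℝ) ^ m) ^ (-(1 / μ))) := by
  obtain ⟨hR₀, hR₁⟩ := hR
  obtain ⟨n₀, hn₀⟩ := Filter.eventually_atTop.1 <| tendsto_natCast_atTop_atTop.eventually <|
    (eventually_const_mul_rpow_neg_le (one_div_pos.2 hμ) c₁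
      (half_pos (sub_pos.2 hR₁))).and (eventually_mul_rpow_mul_log_le_rpow hd)
  refine ⟨n₀, fun m k hm hk εs hεs I hI hmin Pe hmono hPe herase hunion ↦ ?_⟩
  subst hεs
  obtain ⟨hgap, hlog⟩ := hn₀ _ hm
  have hN : ((2 ^ m : ℕ) : ℝ) = 2 ^ m := by norm_cast
  have hδ : (2 : ℝ) ^ (-((m : ℝ) / μ)) = ((2 : ℝ) ^ m) ^ (-(1 / μ)) := by
    rw [← Real.rpow_natCast_mul zero_le_two]
    ring_nf
  have hθ : (2 : ℝ) ^ (-(d * (m : ℝ))) = ((2 : ℝ) ^ m) ^ (-d) := by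
    rw [← Real.rpow_natCast_mul zero_le_two]
    ring_nf
  have hδN : ((2 : ℝ) ^ m) ^ (-(1 / μ)) ≤ 2 ^ m := by
    have h1N : (1 : ℝ) ≤ 2 ^ m := one_le_pow₀ one_le_two
    exact (Real.rpow_le_one_of_one_le_of_nonpos h1N (by simpa using hμ.le)).trans h1N
  have hg₀ : 0 ≤ c₁ * ((2 : ℝ) ^ m) ^ (-(1 / μ)) := by positivity
  rw [hN] at hgap hlog
  have hεs : 1 - R - c₁ * ((2 : ℝ) ^ m) ^ (-(1 / μ)) ∈ Set.Icc (0 : ℝ) 1 :=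
    ⟨by linarith, by linarith⟩
  have hgood := hfrac _ hεs m
  rw [hδ, hθ] at hgood
  have hint := setIntegral_div_le_of_good_fraction (n := 2 ^ m)
    (δ := ((2 : ℝ) ^ m) ^ (-(1 / μ))) (θ := ((2 : ℝ) ^ m) ^ (-d)) hmono hPe herase hunion
    ⟨hR₀, hR₁⟩ hg₀ hgap hmin (by rw [hI, hk, hN]) (by rw [hN]; linarith)
    (by positivity) (by rwa [hN]) (by positivity) (by rwa [hN])
  gcongr
  exact hint.trans_eq (by ring)

/-- **Theorem 1 of the paper.** Suppose `μ ≥ 2` and `c₁ > 0` are such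
that for every `ε ∈ [0,1]` and `m ≥ 0` the fraction of synthetic channels with
`Z^{(b)}(ε) ≤ 2^{−10m}` is at least `1 − ε − c₁ 2^{−m/μ}`. Fix `R ∈ (0,1)`, `μ_s > 0`,
and set `c = 2c₁/(1−R) + 2`. Then for all large enough `n = 2^m` with `nR ∈ ℕ`, taking
`ε* = 1 − R − c₁ n^{−1/μ}` and `I` a set of `nR` indices realizing the `nR` smallest
values of `Z^{(b)}(ε*)`, every block error probability `P_e` (nondecreasing, within
`[0,1]`, bounded by `1 − (1−ε)^n`, and with `P_e(ε*) ≤ Σ_{b∈I} Z^{(b)}(ε*)`) satisfies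
the claimed bound on the average execution time. -/
theorem average_execution_time_polar (μ c₁ R μs : ℝ) (hμ : 2 ≤ μ) (hc₁ : 0 < c₁)
    (hR : R ∈ Set.Ioo (0:ℝ) 1) (hμs : 0 < μs)
    (hfrac : ∀ ε ∈ Set.Icc (0:ℝ) 1, ∀ m : ℕ,
      (((Finset.univ.filter (fun b : Fin m → Bool =>
          polarZ ε b ≤ (2:ℝ) ^ (-(10 * (m:ℝ))))).card : ℝ) / 2 ^ m) ≥
        1 - ε - c₁ * (2:ℝ) ^ (-((m:ℝ) / μ))) :
    ∃ n₀ : ℕ, ∀ m k : ℕ, n₀ ≤ 2 ^ m → (k:ℝ) = (2:ℝ) ^ m * R →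
      ∀ εs : ℝ, εs = 1 - R - c₁ * ((2:ℝ) ^ m) ^ (-(1 / μ)) →
      ∀ I : Finset (Fin m → Bool), I.card = k →
        (∀ b ∈ I, ∀ b' ∉ I, polarZ εs b ≤ polarZ εs b') →
      ∀ Pe : ℝ → ℝ, MonotoneOn Pe (Set.Icc (0:ℝ) 1) →
        (∀ ε ∈ Set.Icc (0:ℝ) 1, Pe ε ∈ Set.Icc (0:ℝ) 1) →
        (∀ ε ∈ Set.Icc (0:ℝ) 1, Pe ε ≤ 1 - (1 - ε) ^ (2 ^ m)) →
        Pe εs ≤ ∑ b ∈ I, polarZ εs b →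
        1 / ((2:ℝ) ^ m * R) +
            (1 / (μs * (2:ℝ) ^ m * R)) * ∫ ε in Set.Ioc (0:ℝ) 1, Pe ε / ε ≤
          1 / ((2:ℝ) ^ m * R) + (1 / (μs * (2:ℝ) ^ m * R)) *
            (-Real.log (1 - R) +
              (2 * c₁ / (1 - R) + 2) * ((2:ℝ) ^ m) ^ (-(1 / μ))) := by
  have hd : 1 / μ + 1 < 10 := by
    linarith [(div_le_one (by linarith : 0 < μ)).2 (by linarith : 1 ≤ μ)]
  exact average_execution_time_polar_general (by linarith) hc₁.le hR hμs hd polarZ hfrac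
end

section
/- Under the hypotheses of the main theorem (μ ≥ 2, c₁ > 0 with 2^{−m}·#{b ∈ {0,1}^m : Z^{(b)}(ε) ≤ 2^{−10m}} ≥ 1 − ε − c₁2^{−m/μ} for all ε ∈ [0,1] and m ≥ 0, R ∈ (0,1), μ_s > 0, c = 2c₁/(1−R) + 2, and c' = c/(μ_s R) + 1/(μ_s R(1−R))), there exists n₀ such that for every integer m with n = 2^m ≥ n₀, nR ∈ ℕ and n(1−R) ≥ 1, the following holds. Set ε* = 1 − R − c₁ n^{−1/μ} and let I ⊆ {0,1}^m be a set of cardinality nR on which Z^{(b)}(ε*) attains its nR smallest values. Let P_e : [0,1] → [0,1] be any nondecreasing function with P_e(ε) ≤ 1 − (1−ε)^n for all ε and P_e(ε*) ≤ Σ_{b∈I} Z^{(b)}(ε*), and define T_polar = 1/(nR) + (1/(μ_s n R)) ∫_0^1 (P_e(ε)/ε) dε and T_MDS = 1/(nR) + (1/(μ_s n R)) Σ_{i=n(1−R)+1}^{n} 1/i. Then n·T_polar − n·T_MDS ≤ c' · n^{−1/μ}. -/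
open MeasureTheory

/-!
The execution time depends on the code only through `∫₀¹ P_e(ε)/ε dε`. For an MDS code this is a
harmonic sum, at least `-log (1 - R) - O(1/n)`. For a polar code, split the integral at
`δ = ε*/n²` and at `ε*`: the union bound `P_e(ε) ≤ nε` makes the first piece `O(1/n)`, monotonicity
and `P_e(ε*) ≤ n⁻²` make the second `O(1/n)`, and `P_e ≤ 1` bounds the last by `-log ε*`.
Here `ε*` is chosen so that at least `nR` indices have `Z^{(b)}(ε*) ≤ n⁻¹⁰`; hence so do all of the
`nR` best ones, and summing over them bounds `P_e(ε*)`.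
Since `ε*` is within `c₁ n^{-1/μ}` of `1 - R`, the logarithms differ by `O(n^{-1/μ})`.
-/

theorem le_of_card_le_card_filter_le {α β : Type*} [Fintype α] [LinearOrder β] {f : α → β}
    {s : Finset α} {t : β} (hs : ∀ a ∈ s, ∀ b ∉ s, f a ≤ f b)
    (hcard : s.card ≤ (Finset.univ.filter fun a => f a ≤ t).card) {a : α} (ha : a ∈ s) :
    f a ≤ t := by
  by_contra hat
  have hsub : Finset.univ.filter (fun b => f b ≤ t) ⊆ s := fun b hb => by
    by_contra hbs
    exact hat ((hs a ha b hbs).trans (Finset.mem_filter.1 hb).2)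
  have hssub : Finset.univ.filter (fun b => f b ≤ t) ⊂ s :=
    (Finset.ssubset_iff_of_subset hsub).2 ⟨a, ha, fun h => hat (Finset.mem_filter.1 h).2⟩
  exact hcard.not_gt (Finset.card_lt_card hssub)

theorem sum_le_inv_sq_of_card_eq_mul {ι : Type*} [Fintype ι] {Z : ι → ℝ} {I : Finset ι}
    {n R a : ℝ} (hn : 1 ≤ n) (hR : R ≤ 1) (ha : 3 ≤ a) (hcard : (I.card : ℝ) = n * R)
    (hI : ∀ b ∈ I, ∀ b' ∉ I, Z b ≤ Z b')
    (hgood : R ≤ ((Finset.univ.filter fun b => Z b ≤ n ^ (-a)).card : ℝ) / n) :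
    ∑ b ∈ I, Z b ≤ (n ^ 2)⁻¹ := by
  have hn0 : 0 < n := by linarith
  have hle : I.card ≤ (Finset.univ.filter fun b => Z b ≤ n ^ (-a)).card := by
    rw [le_div_iff₀' hn0, ← hcard] at hgood
    exact_mod_cast hgood
  calc ∑ b ∈ I, Z b ≤ I.card • n ^ (-a) :=
        Finset.sum_le_card_nsmul _ _ _ fun _ => le_of_card_le_card_filter_le hI hle
    _ = n * R * n ^ (-a) := by rw [nsmul_eq_mul, hcard]
    _ ≤ n * n ^ (-3 : ℝ) := by
        gcongr
        exact mul_le_of_le_one_right hn0.le hR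
    _ = (n ^ 2)⁻¹ := by
        rw [Real.rpow_neg hn0.le, ← Nat.cast_ofNat, Real.rpow_natCast]
        field_simp

theorem neg_log_sub_le_s6 {q d : ℝ} (hd : 0 ≤ d) (hdq : d ≤ q / 2) (hq : 0 < q) :
    -Real.log (q - d) ≤ -Real.log q + 2 * d / q := by
  have hqd : 0 < q - d := by linarith
  have hlog : Real.log q - Real.log (q - d) ≤ 2 * d / q := calc
    Real.log q - Real.log (q - d) = Real.log (q / (q - d)) := (Real.log_div hq.ne' hqd.ne').symm
    _ ≤ q / (q - d) - 1 := Real.log_le_sub_one_of_pos (div_pos hq hqd)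
    _ = d / (q - d) := by field_simp; ring
    _ ≤ d / (q / 2) := by gcongr; linarith
    _ = 2 * d / q := by field_simp
  linarith

theorem log_sq_le_self {x : ℝ} (hx : 0 < x) : Real.log (x ^ 2) ≤ x := by
  have hlog : Real.log x - Real.log 2 ≤ x / 2 - 1 := by
    rw [← Real.log_div hx.ne' two_ne_zero]
    exact Real.log_le_sub_one_of_pos (half_pos hx)
  have hlog_two : Real.log 2 ≤ 1 := (Real.log_le_sub_one_of_pos two_pos).trans_eq (by norm_num)
  rw [Real.log_pow]
  push_cast
  linarith

theorem log_div_sub_inv_le_sum_Ioc {j n : ℕ} (hj : 0 < j) (hjn : j ≤ n) :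
    Real.log (n / j) - 1 / j ≤ ∑ i ∈ Finset.Ioc j n, (1 : ℝ) / i := by
  have hj0 : (0 : ℝ) < j := by exact_mod_cast hj
  have hn0 : (0 : ℝ) < n := by exact_mod_cast hj.trans_le hjn
  have hIco : Real.log (n / j) ≤ ∑ i ∈ Finset.Ico j n, (1 : ℝ) / i := by
    have hanti : AntitoneOn (fun x : ℝ => 1 / x) (Set.Icc j n) := fun x hx y _ hxy =>
      one_div_le_one_div_of_le (hj0.trans_le hx.1) hxy
    rw [← integral_one_div_of_pos hj0 hn0]
    exact hanti.integral_le_sum_Ico hjn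
  have hright := Finset.sum_Ico_add_eq_sum_Icc (f := fun i : ℕ => (1 : ℝ) / i) hjn
  have hleft := Finset.sum_Ioc_add_eq_sum_Icc (f := fun i : ℕ => (1 : ℝ) / i) hjn
  have hnonneg : 0 ≤ (1 : ℝ) / n := by positivity
  linarith

theorem integrableOn_div_id {f : ℝ → ℝ} {b C : ℝ} (hmono : MonotoneOn f (Set.Icc 0 b))
    (hnonneg : ∀ x ∈ Set.Icc 0 b, 0 ≤ f x) (hlin : ∀ x ∈ Set.Icc 0 b, f x ≤ C * x) :
    IntegrableOn (fun x => f x / x) (Set.Ioc 0 b) := by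
  refine IntegrableOn.of_bound (by simp) ?_ C ?_
  · exact ((aemeasurable_restrict_of_monotoneOn measurableSet_Ioc
      (hmono.mono Set.Ioc_subset_Icc_self)).div aemeasurable_id).aestronglyMeasurable
  · filter_upwards [ae_restrict_mem measurableSet_Ioc] with x hx
    have hxI := Set.Ioc_subset_Icc_self hx
    rw [Real.norm_of_nonneg (div_nonneg (hnonneg x hxI) hx.1.le), div_le_iff₀ hx.1]
    exact hlin x hxI

theorem integral_div_id_le_mul_log {f : ℝ → ℝ} {a b c : ℝ} (ha : 0 < a) (hab : a ≤ b)
    (hint : IntervalIntegrable (fun x => f x / x) volume a b) (hf : ∀ x ∈ Set.Icc a b, f x ≤ c) :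
    ∫ x in a..b, f x / x ≤ c * Real.log (b / a) := by
  have hinv : IntervalIntegrable (fun x : ℝ => x⁻¹) volume a b :=
    intervalIntegral.intervalIntegrable_inv
      (fun x hx => (ha.trans_le (Set.uIcc_of_le hab ▸ hx).1).ne') continuousOn_id
  rw [← integral_inv_of_pos ha (ha.trans_le hab), ← intervalIntegral.integral_const_mul]
  refine intervalIntegral.integral_mono_on hab hint (hinv.const_mul c) fun x hx => ?_
  rw [div_eq_mul_inv]
  exact mul_le_mul_of_nonneg_right (hf x hx) (inv_nonneg.2 (ha.le.trans hx.1))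

theorem setIntegral_div_id_le {f : ℝ → ℝ} {C δ e : ℝ} (hδ : 0 < δ) (hδe : δ ≤ e) (he : e ≤ 1)
    (hmono : MonotoneOn f (Set.Icc 0 1)) (hf : ∀ x ∈ Set.Icc (0 : ℝ) 1, f x ∈ Set.Icc (0 : ℝ) 1)
    (hlin : ∀ x ∈ Set.Icc (0 : ℝ) 1, f x ≤ C * x) :
    ∫ x in Set.Ioc (0 : ℝ) 1, f x / x ≤ C * δ + f e * Real.log (e / δ) - Real.log e := by
  have he0 : 0 < e := hδ.trans_le hδe
  have hint : ∀ {a b : ℝ}, 0 ≤ a → a ≤ b → b ≤ 1 →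
      IntervalIntegrable (fun x => f x / x) volume a b := fun ha hab hb =>
    (intervalIntegrable_iff_integrableOn_Ioc_of_le hab).2 <|
      (integrableOn_div_id hmono (fun x hx => (hf x hx).1) hlin).mono_set
        (Set.Ioc_subset_Ioc ha hb)
  have hnear_zero : ∫ x in (0)..δ, f x / x ≤ C * δ := by
    have := intervalIntegral.integral_mono_on_of_le_Ioo hδ.le
      (hint le_rfl hδ.le (hδe.trans he)) (intervalIntegrable_const (c := C)) fun x hx =>
        (div_le_iff₀ hx.1).2 (hlin x ⟨hx.1.le, hx.2.le.trans (hδe.trans he)⟩)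
    simpa [mul_comm] using this
  have hbelow : ∫ x in δ..e, f x / x ≤ f e * Real.log (e / δ) :=
    integral_div_id_le_mul_log hδ hδe (hint hδ.le hδe he) fun x hx =>
      hmono ⟨hδ.le.trans hx.1, hx.2.trans he⟩ ⟨he0.le, he⟩ hx.2
  have habove : ∫ x in e..1, f x / x ≤ 1 * Real.log (1 / e) :=
    integral_div_id_le_mul_log he0 he (hint he0.le he le_rfl) fun x hx =>
      (hf x ⟨he0.le.trans hx.1, hx.2⟩).2
  rw [one_mul, one_div, Real.log_inv] at habove
  rw [← intervalIntegral.integral_of_le zero_le_one,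
    ← intervalIntegral.integral_add_adjacent_intervals (hint le_rfl he0.le he)
      (hint he0.le he le_rfl),
    ← intervalIntegral.integral_add_adjacent_intervals (hint le_rfl hδ.le (hδe.trans he))
      (hint hδ.le hδe he)]
  linarith

theorem setIntegral_div_id_le_of_le_inv_sq {f : ℝ → ℝ} {n e : ℝ} (hn : 1 ≤ n) (he0 : 0 < e)
    (he1 : e ≤ 1) (hmono : MonotoneOn f (Set.Icc 0 1))
    (hf : ∀ x ∈ Set.Icc (0 : ℝ) 1, f x ∈ Set.Icc (0 : ℝ) 1)
    (hlin : ∀ x ∈ Set.Icc (0 : ℝ) 1, f x ≤ n * x) (hfe : f e ≤ (n ^ 2)⁻¹) :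
    ∫ x in Set.Ioc (0 : ℝ) 1, f x / x ≤ 2 / n - Real.log e := by
  have hn0 : 0 < n := by linarith
  have hnear_zero : n * (e / n ^ 2) ≤ 1 / n := calc
    n * (e / n ^ 2) = e / n := by field_simp
    _ ≤ 1 / n := by gcongr
  have hbelow : f e * Real.log (e / (e / n ^ 2)) ≤ 1 / n := calc
    f e * Real.log (e / (e / n ^ 2)) = f e * Real.log (n ^ 2) := by
      rw [div_div_cancel₀ he0.ne']
    _ ≤ (n ^ 2)⁻¹ * n := mul_le_mul hfe (log_sq_le_self hn0)
      (Real.log_nonneg (one_le_pow₀ hn)) (by positivity)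
    _ = 1 / n := by field_simp
  calc ∫ x in Set.Ioc (0 : ℝ) 1, f x / x
      ≤ n * (e / n ^ 2) + f e * Real.log (e / (e / n ^ 2)) - Real.log e :=
        setIntegral_div_id_le (by positivity) (div_le_self he0.le (one_le_pow₀ hn)) he1
          hmono hf hlin
    _ ≤ 1 / n + 1 / n - Real.log e := by gcongr
    _ = 2 / n - Real.log e := by ring

/-- Average execution time of a length-`n`, rate-`R` code with straggling parameter `μs`, where `J`
stands for `∫₀¹ P_e(ε)/ε dε`. For an MDS code with `j = n(1 - R)`, this integral is
`∑_{i=j+1}^n 1/i`. -/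
noncomputable def avgExecTime (n R μs J : ℝ) : ℝ :=
  1 / (n * R) + 1 / (μs * n * R) * J

theorem mul_avgExecTime_sub_mul_avgExecTime {n : ℝ} (hn : n ≠ 0) (R μs J S : ℝ) :
    n * avgExecTime n R μs J - n * avgExecTime n R μs S = (J - S) / (μs * R) := by
  simp only [avgExecTime]
  field_simp
  ring

theorem setIntegral_div_id_sub_sum_Ioc_le {f : ℝ → ℝ} {n j : ℕ} {R d : ℝ} (hn : 1 ≤ n)
    (hR0 : 0 ≤ R) (hR1 : R < 1) (hj : (j : ℝ) = n * (1 - R)) (hd : 0 ≤ d) (hdR : d ≤ (1 - R) / 2)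
    (hmono : MonotoneOn f (Set.Icc 0 1)) (hf : ∀ x ∈ Set.Icc (0 : ℝ) 1, f x ∈ Set.Icc (0 : ℝ) 1)
    (hunion : ∀ x ∈ Set.Icc (0 : ℝ) 1, f x ≤ 1 - (1 - x) ^ n)
    (hfd : f (1 - R - d) ≤ ((n : ℝ) ^ 2)⁻¹) :
    (∫ x in Set.Ioc (0 : ℝ) 1, f x / x) - ∑ i ∈ Finset.Ioc j n, (1 : ℝ) / i ≤
      2 * d / (1 - R) + (2 + 1 / (1 - R)) * (1 / n) := by
  have hq : 0 < 1 - R := by linarith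
  have hn1 : (1 : ℝ) ≤ n := by exact_mod_cast hn
  have hn0 : (0 : ℝ) < n := by linarith
  have hlin : ∀ x ∈ Set.Icc (0 : ℝ) 1, f x ≤ n * x := fun x hx => by
    have hbernoulli := one_add_mul_le_pow (a := -x) (by linarith [hx.2]) n
    rw [← sub_eq_add_neg] at hbernoulli
    linarith [hunion x hx]
  have hint : ∫ x in Set.Ioc (0 : ℝ) 1, f x / x ≤ 2 / n - Real.log (1 - R - d) :=
    setIntegral_div_id_le_of_le_inv_sq hn1 (by linarith) (by linarith) hmono hf hlin hfd
  have hlog : -Real.log (1 - R - d) ≤ -Real.log (1 - R) + 2 * d / (1 - R) :=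
    neg_log_sub_le_s6 hd hdR hq
  have hsum : -Real.log (1 - R) - 1 / (1 - R) * (1 / n) ≤
      ∑ i ∈ Finset.Ioc j n, (1 : ℝ) / i := by
    have hj0 : 0 < j := Nat.cast_pos.1 (hj ▸ mul_pos hn0 hq)
    have hjn : j ≤ n := Nat.cast_le.1 (hj.trans_le (mul_le_of_le_one_right hn0.le (by linarith)))
    have hharmonic := log_div_sub_inv_le_sum_Ioc hj0 hjn
    rwa [hj, div_mul_cancel_left₀ hn0.ne', Real.log_inv, ← one_div_mul_one_div_rev] at hharmonic
  calc (∫ x in Set.Ioc (0 : ℝ) 1, f x / x) - ∑ i ∈ Finset.Ioc j n, (1 : ℝ) / i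
      ≤ (2 / n + (-Real.log (1 - R) + 2 * d / (1 - R))) -
          (-Real.log (1 - R) - 1 / (1 - R) * (1 / n)) := by linarith
    _ = 2 * d / (1 - R) + (2 + 1 / (1 - R)) * (1 / n) := by ring

theorem mul_avgExecTime_sub_le {f : ℝ → ℝ} {n j : ℕ} {μ c R μs : ℝ} (hn : 1 ≤ n) (hμ : 1 ≤ μ)
    (hc : 0 ≤ c) (hR0 : 0 ≤ R) (hR1 : R < 1) (hμs : 0 ≤ μs) (hj : (j : ℝ) = n * (1 - R))
    (hsmall : c * (n : ℝ) ^ (-(1 / μ)) ≤ (1 - R) / 2)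
    (hmono : MonotoneOn f (Set.Icc 0 1)) (hf : ∀ x ∈ Set.Icc (0 : ℝ) 1, f x ∈ Set.Icc (0 : ℝ) 1)
    (hunion : ∀ x ∈ Set.Icc (0 : ℝ) 1, f x ≤ 1 - (1 - x) ^ n)
    (hfe : f (1 - R - c * (n : ℝ) ^ (-(1 / μ))) ≤ ((n : ℝ) ^ 2)⁻¹) :
    n * avgExecTime n R μs (∫ x in Set.Ioc (0 : ℝ) 1, f x / x) -
        n * avgExecTime n R μs (∑ i ∈ Finset.Ioc j n, (1 : ℝ) / i) ≤
      ((2 * c / (1 - R) + 2) / (μs * R) + 1 / (μs * R * (1 - R))) * (n : ℝ) ^ (-(1 / μ)) := by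
  have : 0 < 1 - R := by linarith
  have hn1 : (1 : ℝ) ≤ n := by exact_mod_cast hn
  have hinv : 1 / (n : ℝ) ≤ (n : ℝ) ^ (-(1 / μ)) := by
    rw [one_div, ← Real.rpow_neg_one]
    exact Real.rpow_le_rpow_of_exponent_le hn1
      (neg_le_neg ((div_le_one (by linarith)).2 hμ))
  rw [mul_avgExecTime_sub_mul_avgExecTime (by linarith)]
  set r := (n : ℝ) ^ (-(1 / μ))
  have hgap := setIntegral_div_id_sub_sum_Ioc_le hn hR0 hR1 hj (by positivity) hsmall hmono hf
    hunion hfe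
  calc ((∫ x in Set.Ioc (0 : ℝ) 1, f x / x) - ∑ i ∈ Finset.Ioc j n, (1 : ℝ) / i) / (μs * R)
      ≤ (2 * (c * r) / (1 - R) + (2 + 1 / (1 - R)) * r) / (μs * R) := by
        gcongr
        exact hgap.trans (by gcongr)
    _ = ((2 * c / (1 - R) + 2) / (μs * R) + 1 / (μs * R * (1 - R))) * r := by
        rw [← div_div 1 (μs * R)]
        ring

theorem exists_forall_mul_rpow_neg_le {μ t : ℝ} (c : ℝ) (hμ : 0 < μ) (ht : 0 < t) :
    ∃ n₀ : ℕ, ∀ n ≥ n₀, c * (n : ℝ) ^ (-(1 / μ)) ≤ t := by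
  have hlim : Filter.Tendsto (fun n : ℕ => c * (n : ℝ) ^ (-(1 / μ))) Filter.atTop (nhds 0) := by
    simpa using ((tendsto_rpow_neg_atTop (one_div_pos.2 hμ)).comp
      tendsto_natCast_atTop_atTop).const_mul c
  exact Filter.eventually_atTop.1 (hlim.eventually_le_const ht)

/-- Polarization enters only through the fraction of erasure probabilities below `n⁻ᵃ`, so `Z` may
be any family of channel parameters. -/
theorem gap_to_optimum_polar_general {ι : ℕ → Type*} [∀ m, Fintype (ι m)]
    (Z : ∀ m, ℝ → ι m → ℝ) {a μ c₁ R μs : ℝ} (ha : 3 ≤ a) (hμ : 1 ≤ μ) (hc₁ : 0 ≤ c₁)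
    (hR : R ∈ Set.Ioo (0 : ℝ) 1) (hμs : 0 < μs)
    (hfrac : ∀ ε ∈ Set.Icc (0 : ℝ) 1, ∀ m : ℕ,
      ((Finset.univ.filter fun b => Z m ε b ≤ (2 : ℝ) ^ (-(a * (m : ℝ)))).card : ℝ) / 2 ^ m ≥
        1 - ε - c₁ * (2 : ℝ) ^ (-((m : ℝ) / μ))) :
    ∃ n₀ : ℕ, ∀ m k j : ℕ, n₀ ≤ 2 ^ m → (k : ℝ) = (2 : ℝ) ^ m * R →
      (j : ℝ) = (2 : ℝ) ^ m * (1 - R) →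
      ∀ εs : ℝ, εs = 1 - R - c₁ * ((2 : ℝ) ^ m) ^ (-(1 / μ)) →
      ∀ I : Finset (ι m), I.card = k → (∀ b ∈ I, ∀ b' ∉ I, Z m εs b ≤ Z m εs b') →
      ∀ Pe : ℝ → ℝ, MonotoneOn Pe (Set.Icc (0 : ℝ) 1) →
        (∀ ε ∈ Set.Icc (0 : ℝ) 1, Pe ε ∈ Set.Icc (0 : ℝ) 1) →
        (∀ ε ∈ Set.Icc (0 : ℝ) 1, Pe ε ≤ 1 - (1 - ε) ^ (2 ^ m)) →
        Pe εs ≤ ∑ b ∈ I, Z m εs b →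
        (2 : ℝ) ^ m * avgExecTime (2 ^ m) R μs (∫ ε in Set.Ioc (0 : ℝ) 1, Pe ε / ε) -
          (2 : ℝ) ^ m *
            avgExecTime (2 ^ m) R μs (∑ i ∈ Finset.Ioc j (2 ^ m), (1 : ℝ) / i) ≤
        ((2 * c₁ / (1 - R) + 2) / (μs * R) + 1 / (μs * R * (1 - R))) *
          ((2 : ℝ) ^ m) ^ (-(1 / μ)) := by
  obtain ⟨hR0, hR1⟩ := hR
  obtain ⟨n₀, hn₀⟩ := exists_forall_mul_rpow_neg_le c₁ (μ := μ) (t := (1 - R) / 2)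
    (by linarith) (by linarith)
  refine ⟨n₀, fun m k j hm hk hj εs hεs I hIk hI Pe hmono hPe hunion hPeI => ?_⟩
  subst hεs
  have hsmall : c₁ * ((2 : ℝ) ^ m) ^ (-(1 / μ)) ≤ (1 - R) / 2 := by exact_mod_cast hn₀ _ hm
  have hback : 0 ≤ c₁ * ((2 : ℝ) ^ m) ^ (-(1 / μ)) := by positivity
  have hgood := hfrac (1 - R - c₁ * ((2 : ℝ) ^ m) ^ (-(1 / μ))) ⟨by linarith, by linarith⟩ m
  rw [show -((m : ℝ) / μ) = m * -(1 / μ) by ring, show -(a * (m : ℝ)) = m * -a by ring,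
    Real.rpow_natCast_mul zero_le_two, Real.rpow_natCast_mul zero_le_two] at hgood
  have hPe_inv_sq := hPeI.trans <| sum_le_inv_sq_of_card_eq_mul (one_le_pow₀ one_le_two) hR1.le ha
    (hIk ▸ hk) hI (by linarith)
  have hgap := mul_avgExecTime_sub_le (n := 2 ^ m) (j := j) (μ := μ) (c := c₁) (R := R) (μs := μs)
    Nat.one_le_two_pow hμ hc₁ hR0.le hR1 hμs.le (by exact_mod_cast hj) (by exact_mod_cast hsmall)
    hmono hPe hunion (by exact_mod_cast hPe_inv_sq)
  exact_mod_cast hgap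

/-- **Corollary 1 of the paper.** Under the hypotheses of the main
theorem, with `c = 2c₁/(1−R) + 2` and `c' = c/(μ_s R) + 1/(μ_s R(1−R))`, for all large
enough `n = 2^m` with `nR ∈ ℕ` and `n(1−R) = j ≥ 1` an integer: with
`ε* = 1 − R − c₁ n^{−1/μ}`, `I` the set of `nR` smallest values of `Z^{(b)}(ε*)`, and
`P_e` any admissible block error probability, the normalized gap between the average
execution time of the polar code and of the MDS code is at most `c' n^{−1/μ}`. -/
theorem gap_to_optimum_polar (μ c₁ R μs : ℝ) (hμ : 2 ≤ μ) (hc₁ : 0 < c₁)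
    (hR : R ∈ Set.Ioo (0:ℝ) 1) (hμs : 0 < μs)
    (hfrac : ∀ ε ∈ Set.Icc (0:ℝ) 1, ∀ m : ℕ,
      (((Finset.univ.filter (fun b : Fin m → Bool =>
          polarZ ε b ≤ (2:ℝ) ^ (-(10 * (m:ℝ))))).card : ℝ) / 2 ^ m) ≥
        1 - ε - c₁ * (2:ℝ) ^ (-((m:ℝ) / μ))) :
    ∃ n₀ : ℕ, ∀ m k j : ℕ, n₀ ≤ 2 ^ m → (k:ℝ) = (2:ℝ) ^ m * R →
      1 ≤ j → (j:ℝ) = (2:ℝ) ^ m * (1 - R) →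
      ∀ εs : ℝ, εs = 1 - R - c₁ * ((2:ℝ) ^ m) ^ (-(1 / μ)) →
      ∀ I : Finset (Fin m → Bool), I.card = k →
        (∀ b ∈ I, ∀ b' ∉ I, polarZ εs b ≤ polarZ εs b') →
      ∀ Pe : ℝ → ℝ, MonotoneOn Pe (Set.Icc (0:ℝ) 1) →
        (∀ ε ∈ Set.Icc (0:ℝ) 1, Pe ε ∈ Set.Icc (0:ℝ) 1) →
        (∀ ε ∈ Set.Icc (0:ℝ) 1, Pe ε ≤ 1 - (1 - ε) ^ (2 ^ m)) →
        Pe εs ≤ ∑ b ∈ I, polarZ εs b →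
        (2:ℝ) ^ m * (1 / ((2:ℝ) ^ m * R) +
            (1 / (μs * (2:ℝ) ^ m * R)) * ∫ ε in Set.Ioc (0:ℝ) 1, Pe ε / ε) -
          (2:ℝ) ^ m * (1 / ((2:ℝ) ^ m * R) +
            (1 / (μs * (2:ℝ) ^ m * R)) * ∑ i ∈ Finset.Ioc j (2 ^ m), (1:ℝ) / i) ≤
        ((2 * c₁ / (1 - R) + 2) / (μs * R) + 1 / (μs * R * (1 - R))) *
          ((2:ℝ) ^ m) ^ (-(1 / μ)) := by
  obtain ⟨n₀, h⟩ := gap_to_optimum_polar_general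
    (fun m ε (b : Fin m → Bool) => polarZ ε b) (a := 10) (by norm_num)
    (one_le_two.trans hμ) hc₁.le hR hμs hfrac
  exact ⟨n₀, fun m k j hm hk _ => h m k j hm hk⟩
end
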